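/- The stabilizer subgroup {g ∈ GL₄(𝔽₂) : c₀ ∘ g = c₀} of the cubic form c₀ = x²t + y²z + yz² + xt² is isomorphic to the symmetric group S₆ (in particular it has order 720). -/

import Mathlib

open MvPolynomial

noncomputable section

/-- The field with two elements. -/
abbrev F2 : Type := ZMod 2

/-- An algebraic closure of `F2`. -/
abbrev Kbar : Type := AlgebraicClosure F2

/-- Linear substitution action of a matrix `g` on a polynomial `f`:
`(act g f)(x) = f (g * x)`, i.e. the variable `X i` is replaced by `∑ j, g i j • X j`. -/
def act (g : Matrix (Fin 4) (Fin 4) F2) (f : MvPolynomial (Fin 4) F2) :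
    MvPolynomial (Fin 4) F2 :=
  aeval (fun i => ∑ j, g i j • X j) f

lemma act_one (f : MvPolynomial (Fin 4) F2) : act 1 f = f := by
  have h : (fun i => ∑ j, (1 : Matrix (Fin 4) (Fin 4) F2) i j • (X j : MvPolynomial (Fin 4) F2))
      = X := by
    funext i
    simp [Matrix.one_apply, ite_smul]
  simp [act, h]

lemma act_act (g h : Matrix (Fin 4) (Fin 4) F2) (f : MvPolynomial (Fin 4) F2) :
    act g (act h f) = act (h * g) f := by
  show (aeval _) ((aeval _) f) = _
  rw [← AlgHom.comp_apply, comp_aeval]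
  have key : (fun i => (aeval fun i => ∑ j, g i j • (X j : MvPolynomial (Fin 4) F2))
        (∑ j, h i j • (X j : MvPolynomial (Fin 4) F2)))
      = fun i => ∑ j, (h * g) i j • (X j : MvPolynomial (Fin 4) F2) := by
    funext i
    simp only [map_sum, map_smul, aeval_X, Matrix.mul_apply, Finset.smul_sum, smul_smul,
      Finset.sum_smul]
    rw [Finset.sum_comm]
  rw [key]
  rfl

/-- The stabilizer of a polynomial `f` under the linear-substitution action of `GL₄(𝔽₂)`. -/
def stab (f : MvPolynomial (Fin 4) F2) : Subgroup (GL (Fin 4) F2) where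
  carrier := {g | act (g : Matrix (Fin 4) (Fin 4) F2) f = f}
  one_mem' := by simpa using act_one f
  mul_mem' := by
    intro a b ha hb
    simp only [Set.mem_setOf_eq] at *
    have : act ((↑(a * b) : Matrix (Fin 4) (Fin 4) F2)) f = act ↑b (act ↑a f) := by
      rw [act_act]; rfl
    rw [this, ha, hb]
  inv_mem' := by
    intro a ha
    simp only [Set.mem_setOf_eq] at *
    have h2 := congrArg (act ((↑(a⁻¹) : Matrix (Fin 4) (Fin 4) F2))) ha
    rw [act_act] at h2
    rw [Units.mul_inv, act_one] at h2
    exact h2.symm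

/-- A smooth cubic form over `𝔽₂`: homogeneous of degree `3`, such that over an algebraic
closure the only common zero of `f` and its four partial derivatives is the origin. -/
def IsSmoothCubic (f : MvPolynomial (Fin 4) F2) : Prop :=
  f.IsHomogeneous 3 ∧
    ∀ v : Fin 4 → Kbar,
      eval v (map (algebraMap F2 Kbar) f) = 0 →
      (∀ i : Fin 4, eval v (map (algebraMap F2 Kbar) (pderiv i f)) = 0) →
      v = 0

/-- The cubic form `x²t + y²z + yz² + xt²`. -/
def c0 : MvPolynomial (Fin 4) F2 :=
  X 0 ^ 2 * X 3 + X 1 ^ 2 * X 2 + X 1 * X 2 ^ 2 + X 0 * X 3 ^ 2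

/-!
Over `𝔽₂` the cubic `∑ Aᵢⱼ xᵢ² xⱼ` is the value at `(x, x)` of a form that is Frobenius-semilinear
in its first argument, so substituting `g` replaces its Gram matrix `A` by `gᵀ A g`. As `c₀` has
the antidiagonal Gram matrix, its stabilizer is the symplectic group `Sp₄(2)`.

The symplectic form is the polar form of the elliptic quadratic form `Q = x² + xt + t² + yz`. The
quadratic forms with this polar form are the shifts `Qₐ x = Q x + polar Q a x = Q (x + a) + Q a`,
and `Qₐ` has the Arf invariant of `Q` precisely when `Q a = 0`. So `Sp₄(2)` permutes the six
shifts by the zeros of `Q`. The transvection along `v` fixes a form `P` with `P v = 1` and maps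
`P` to its shift by `v` if `P v = 0`; since `Q_c (a + b) = Q (a + b + c)` and the sum of three
distinct zeros of `Q` is never a zero, the transvection along `a + b` induces the transposition of
`Qₐ` and `Q_b`. These transpositions generate `S₆`, and the action is faithful because the zeros
of `Q` span `𝔽₂⁴`.
-/

section FrobeniusForm

open Matrix

lemma single_add_single_one_inj {n : Type*} {p : ℕ} (hp : 2 ≤ p) {i j k l : n} :
    (Finsupp.single i p + Finsupp.single j 1 : n →₀ ℕ) = Finsupp.single k p + Finsupp.single l 1 ↔
      i = k ∧ j = l := by
  classical
  refine ⟨fun h ↦ ?_, by rintro ⟨rfl, rfl⟩; rfl⟩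
  have hi := DFunLike.congr_fun h i
  have hj := DFunLike.congr_fun h j
  simp only [Finsupp.add_apply, Finsupp.single_apply] at hi hj
  grind

variable {n R : Type*} [Fintype n] [CommRing R]

/-- The Frobenius form `∑ᵢⱼ A i j * Xᵢ ^ p * Xⱼ` with Gram matrix `A`, written as a product of
vectors so that linear substitutions become matrix products. -/
def frobeniusForm (p : ℕ) (A : Matrix n n R) : MvPolynomial n R :=
  (fun i ↦ X i ^ p) ⬝ᵥ A.map C *ᵥ X

lemma frobeniusForm_eq_sum (p : ℕ) (A : Matrix n n R) :
    frobeniusForm p A =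
      ∑ i, ∑ j, monomial (Finsupp.single i p + Finsupp.single j 1) (A i j) := by
  simp only [frobeniusForm, dotProduct, mulVec, map_apply, Finset.mul_sum]
  refine Finset.sum_congr rfl fun i _ ↦ Finset.sum_congr rfl fun j _ ↦ ?_
  rw [mul_left_comm, X_pow_eq_monomial, X, monomial_mul, C_mul_monomial, mul_one, mul_one]

lemma coeff_frobeniusForm {p : ℕ} (hp : 2 ≤ p) (A : Matrix n n R) (i j : n) :
    coeff (Finsupp.single i p + Finsupp.single j 1) (frobeniusForm p A) = A i j := by
  classical
  simp [frobeniusForm_eq_sum, coeff_sum, coeff_monomial, single_add_single_one_inj hp, ite_and]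

lemma frobeniusForm_injective {p : ℕ} (hp : 2 ≤ p) :
    Function.Injective (frobeniusForm p : Matrix n n R → MvPolynomial n R) := fun A B h ↦ by
  ext i j
  rw [← coeff_frobeniusForm hp A, h, coeff_frobeniusForm hp]

lemma aeval_frobeniusForm {p : ℕ} [ExpChar R p] (g A : Matrix n n R) :
    aeval (fun i ↦ ∑ j, g i j • (X j : MvPolynomial n R)) (frobeniusForm p A) =
      frobeniusForm p ((g.map (frobenius R p))ᵀ * A * g) := by
  have hX : (fun i ↦ ∑ j, g i j • (X j : MvPolynomial n R)) = g.map C *ᵥ X := by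
    ext1 i
    simp only [mulVec, dotProduct, map_apply, smul_eq_C_mul]
  have hXp : (fun i ↦ (g.map C *ᵥ X : n → MvPolynomial n R) i ^ p) =
      (g.map (frobenius R p)).map C *ᵥ fun j ↦ X j ^ p := by
    ext1 i
    simp only [mulVec, dotProduct, map_apply, sum_pow_char p, mul_pow, frobenius_def, C_pow]
  calc aeval _ (frobeniusForm p A)
      = (fun i ↦ (g.map C *ᵥ X : n → MvPolynomial n R) i ^ p) ⬝ᵥ A.map C *ᵥ (g.map C *ᵥ X) := by
        simp only [hX, frobeniusForm, dotProduct, mulVec, map_sum, map_mul, map_pow, aeval_X,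
          map_apply, algHom_C, algebraMap_eq]
    _ = frobeniusForm p ((g.map (frobenius R p))ᵀ * A * g) := by
        rw [hXp, frobeniusForm, Matrix.map_mul, Matrix.map_mul, transpose_map,
          ← mulVec_mulVec, ← mulVec_mulVec, dotProduct_mulVec _ _ᵀ, vecMul_transpose]

end FrobeniusForm

section IsometryGroup

/-- The group of linear automorphisms preserving a bilinear form; for a nondegenerate alternating
form this is the symplectic group. -/
def isometryGroup {R M : Type*} [CommSemiring R] [AddCommMonoid M] [Module R M]
    (B : LinearMap.BilinForm R M) : Subgroup (M ≃ₗ[R] M) where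
  carrier := {g | ∀ x y, B (g x) (g y) = B x y}
  one_mem' _ _ := rfl
  mul_mem' hg hh x y := (hg _ _).trans (hh x y)
  inv_mem' {g} hg x y := by
    simpa only [LinearEquiv.coe_inv, g.apply_symm_apply] using (hg (g.symm x) (g.symm y)).symm

variable {R M : Type*} [CommRing R] [AddCommGroup M] [Module R M] {B : LinearMap.BilinForm R M}

/-- The transvection `x ↦ x + B a x • a` along `a`, as an isometry of the alternating form `B`. -/
def symplecticTransvection (hB : B.IsAlt) (a : M) : isometryGroup B :=
  ⟨LinearEquiv.transvection (hB a), fun x y ↦ by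
    simp only [LinearEquiv.transvection.apply, map_add, map_smul, LinearMap.add_apply,
      LinearMap.smul_apply, smul_eq_mul, hB a, ← hB.neg_eq a x]
    ring⟩

lemma coe_symplecticTransvection_apply (hB : B.IsAlt) (a x : M) :
    (symplecticTransvection hB a : M ≃ₗ[R] M) x = x + B a x • a := rfl

end IsometryGroup

lemma F2.eq_one_iff_ne_zero : ∀ {x : F2}, x = 1 ↔ x ≠ 0 := by decide

lemma ncard_preimage_equiv {α β : Type*} (e : α ≃ β) (s : Set β) : (e ⁻¹' s).ncard = s.ncard :=
  congrArg ENat.toNat (Set.encard_preimage_of_bijective e.bijective s)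

section QuadraticForm

open QuadraticMap (polar)

variable {V : Type*} [AddCommGroup V] [Module F2 V]

/-- The quadratic form `Q + polar Q a` over `𝔽₂`. The linear form `polar Q a` is encoded as its
square, with which it agrees over `𝔽₂`. -/
def shift (Q : QuadraticForm F2 V) (a : V) : QuadraticForm F2 V :=
  Q + QuadraticMap.sq.comp (Q.polarBilin a)

/-- The zero vectors of a quadratic form. -/
def zeros (Q : QuadraticForm F2 V) : Set V := {x | Q x = 0}

/-- The quadratic forms with the same polar form and the same number of zeros as `Q`. When the
polar form is nondegenerate, these are the refinements of it with the Arf invariant of `Q`. -/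
def companions (Q : QuadraticForm F2 V) : Set (QuadraticForm F2 V) :=
  {P | P.polarBilin = Q.polarBilin ∧ (zeros P).ncard = (zeros Q).ncard}

/-- A Sidon set of vectors over `𝔽₂`: the sum of three distinct members is never a member, that is,
no four distinct members have sum zero. -/
def IsSidon (S : Set V) : Prop :=
  ∀ a ∈ S, ∀ b ∈ S, ∀ c ∈ S, a ≠ b → b ≠ c → a ≠ c → a + b + c ∉ S

variable (Q : QuadraticForm F2 V)

lemma isAlt_polarBilin : LinearMap.BilinForm.IsAlt Q.polarBilin := fun x ↦ by
  rw [QuadraticMap.polarBilin_apply_apply, QuadraticMap.polar_self, two_nsmul,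
    CharTwo.add_self_eq_zero]

lemma shift_apply (a x : V) : shift Q a x = Q x + polar Q a x := by
  simp only [shift, add_apply, QuadraticMap.comp_apply, QuadraticMap.sq_apply,
    QuadraticMap.polarBilin_apply_apply, ← sq, ZMod.pow_card]

lemma shift_apply_eq_add (a x : V) : shift Q a x = Q (x + a) + Q a := by
  rw [shift_apply, QuadraticMap.map_add Q, QuadraticMap.polar_comm, add_right_comm,
    add_assoc _ _ (Q a), CharTwo.add_self_eq_zero, add_zero]

lemma polarBilin_shift (a : V) : (shift Q a).polarBilin = Q.polarBilin := by
  ext x y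
  change shift Q a (x + y) - shift Q a x - shift Q a y = Q (x + y) - Q x - Q y
  simp only [shift_apply, QuadraticMap.polar_add_right]
  ring

lemma shift_shift (a b : V) : shift (shift Q a) b = shift Q (a + b) := by
  ext x
  rw [shift_apply, shift_apply, shift_apply, QuadraticMap.polar_add_left, add_assoc,
    ← QuadraticMap.polarBilin_apply_apply (shift Q a), polarBilin_shift,
    QuadraticMap.polarBilin_apply_apply]

variable {Q}

lemma shift_injective (hB : Q.polarBilin.SeparatingLeft) : Function.Injective (shift Q) := by
  refine fun a b hab ↦ sub_eq_zero.mp (hB _ fun x ↦ ?_)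
  have hx : Q x + polar Q a x = Q x + polar Q b x := by rw [← shift_apply, hab, shift_apply]
  rw [QuadraticMap.polarBilin_apply_apply, QuadraticMap.polar_sub_left, add_left_cancel hx,
    sub_self]

/-- The difference of the two forms is additive, hence of the form `polar Q a`. -/
lemma exists_shift_eq [FiniteDimensional F2 V] (hB : Q.polarBilin.Nondegenerate)
    {P : QuadraticForm F2 V} (hP : P.polarBilin = Q.polarBilin) : ∃ a, shift Q a = P := by
  have hpolar x y : polar P x y = polar Q x y := LinearMap.congr_fun₂ hP x y
  let f : V →ₗ[F2] F2 := (AddMonoidHom.mk' (fun x ↦ P x - Q x) fun x y ↦ by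
    rw [QuadraticMap.map_add P, QuadraticMap.map_add Q, hpolar]; ring).toZModLinearMap 2
  refine ⟨(LinearMap.BilinForm.toDual Q.polarBilin hB).symm f, ?_⟩
  ext x
  have hf : polar Q ((LinearMap.BilinForm.toDual Q.polarBilin hB).symm f) x = P x - Q x :=
    LinearMap.BilinForm.apply_toDual_symm_apply (B := Q.polarBilin) (hB := hB) f x
  rw [shift_apply, hf, add_sub_cancel]

lemma ncard_zeros_shift_of_eq_zero {a : V} (ha : Q a = 0) :
    (zeros (shift Q a)).ncard = (zeros Q).ncard := by
  have hpre : zeros (shift Q a) = Equiv.addRight a ⁻¹' zeros Q := by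
    ext x
    simp only [zeros, Set.mem_preimage, Set.mem_ofPred_eq, shift_apply_eq_add, ha, add_zero,
      Equiv.coe_addRight]
  rw [hpre, ncard_preimage_equiv]

lemma ncard_zeros_shift_of_ne_zero [Finite V] {a : V} (ha : Q a ≠ 0) :
    (zeros Q).ncard + (zeros (shift Q a)).ncard = Nat.card V := by
  have hpre : zeros (shift Q a) = Equiv.addRight a ⁻¹' (zeros Q)ᶜ := by
    ext x
    simp only [zeros, Set.mem_preimage, Set.mem_compl_iff, Set.mem_ofPred_eq, shift_apply_eq_add,
      CharTwo.add_eq_zero, F2.eq_one_iff_ne_zero.2 ha, Equiv.coe_addRight, F2.eq_one_iff_ne_zero]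
  rw [hpre, ncard_preimage_equiv, Set.ncard_add_ncard_compl]

lemma shift_mem_companions {a : V} (ha : a ∈ zeros Q) : shift Q a ∈ companions Q :=
  ⟨polarBilin_shift Q a, ncard_zeros_shift_of_eq_zero ha⟩

lemma shift_mem_companions_iff [Finite V] (hN : 2 * (zeros Q).ncard ≠ Nat.card V) {a : V} :
    shift Q a ∈ companions Q ↔ a ∈ zeros Q := by
  refine ⟨fun h ↦ ?_, shift_mem_companions⟩
  by_contra ha
  rw [← ncard_zeros_shift_of_ne_zero ha, h.2] at hN
  exact hN (two_mul _)

/-- A quadratic form with nondegenerate polar form has as many companions as zeros, unless exactly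
half of the vectors are zeros. -/
def zerosEquivCompanions [Finite V] (hB : Q.polarBilin.Nondegenerate)
    (hN : 2 * (zeros Q).ncard ≠ Nat.card V) : zeros Q ≃ companions Q :=
  Equiv.ofBijective (fun a ↦ ⟨shift Q a, shift_mem_companions a.2⟩)
    ⟨fun _ _ h ↦ Subtype.ext (shift_injective hB.1 (congrArg Subtype.val h)), fun P ↦ by
      obtain ⟨a, ha⟩ := exists_shift_eq hB P.2.1
      exact ⟨⟨a, (shift_mem_companions_iff hN).1 (ha ▸ P.2)⟩, Subtype.ext ha⟩⟩

lemma comp_mem_companions {P : QuadraticForm F2 V} (hP : P ∈ companions Q)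
    {g : V ≃ₗ[F2] V} (hg : g ∈ isometryGroup Q.polarBilin) :
    P.comp g.toLinearMap ∈ companions Q := by
  refine ⟨?_, ?_⟩
  · rw [QuadraticMap.polarBilin_comp, hP.1]
    exact LinearMap.ext₂ hg
  · have hpre : zeros (P.comp g.toLinearMap) = g.toEquiv ⁻¹' zeros P := rfl
    rw [hpre, ncard_preimage_equiv, hP.2]

instance : MulAction (isometryGroup Q.polarBilin) (companions Q) where
  smul g P := ⟨P.1.comp (g⁻¹).1.toLinearMap, comp_mem_companions P.2 (g⁻¹).2⟩
  one_smul _ := rfl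
  mul_smul _ _ _ := rfl

lemma coe_smul_companions_apply (g : isometryGroup Q.polarBilin) (P : companions Q) (x : V) :
    (g • P).1 x = P.1 ((g⁻¹).1 x) := rfl

lemma smul_companions_eq_iff {g : isometryGroup Q.polarBilin} {P P' : companions Q} :
    g • P = P' ↔ P'.1.comp g.1.toLinearMap = P.1 := by
  rw [← eq_inv_smul_iff, eq_comm, Subtype.ext_iff]
  rfl

/-- `B` is separate from `Q.polarBilin` because one transvection is applied to all companions. -/
lemma apply_symplecticTransvection {B : LinearMap.BilinForm F2 V} (hB : B.IsAlt)
    (hQ : Q.polarBilin = B) (a x : V) :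
    Q ((symplecticTransvection hB a).1 x) = Q x + polar Q a x * (Q a + 1) := by
  subst hQ
  rw [coe_symplecticTransvection_apply, QuadraticMap.map_add Q, QuadraticMap.map_smul,
    QuadraticMap.polar_smul_right, QuadraticMap.polar_comm Q x, QuadraticMap.polarBilin_apply_apply,
    smul_eq_mul, smul_eq_mul, ← sq, ZMod.pow_card]
  ring

lemma comp_symplecticTransvection_of_eq_zero {B : LinearMap.BilinForm F2 V} (hB : B.IsAlt)
    (hQ : Q.polarBilin = B) {a : V} (ha : Q a = 0) :
    Q.comp (symplecticTransvection hB a).1.toLinearMap = shift Q a := by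
  ext x
  rw [QuadraticMap.comp_apply, LinearEquiv.coe_coe, apply_symplecticTransvection hB hQ, ha,
    zero_add, mul_one, shift_apply]

lemma comp_symplecticTransvection_of_ne_zero {B : LinearMap.BilinForm F2 V} (hB : B.IsAlt)
    (hQ : Q.polarBilin = B) {a : V} (ha : Q a ≠ 0) :
    Q.comp (symplecticTransvection hB a).1.toLinearMap = Q := by
  ext x
  rw [QuadraticMap.comp_apply, LinearEquiv.coe_coe, apply_symplecticTransvection hB hQ,
    F2.eq_one_iff_ne_zero.2 ha, CharTwo.add_self_eq_zero, mul_zero, add_zero]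

lemma nondegenerate_polarBilin_of_orthogonal_zeros
    (horth : ∀ x, (∀ a ∈ zeros Q, polar Q a x = 0) → x = 0) :
    Q.polarBilin.Nondegenerate :=
  (isAlt_polarBilin Q).isRefl.nondegenerate_iff_separatingLeft.2 fun x hx ↦
    horth x fun a _ ↦ (QuadraticMap.polar_comm Q a x).trans (hx a)

lemma toPermHom_companions_injective
    (horth : ∀ x, (∀ a ∈ zeros Q, polar Q a x = 0) → x = 0) :
    Function.Injective
      (MulAction.toPermHom (isometryGroup Q.polarBilin) (companions Q)) := by
  intro g h hgh
  have happly {P : QuadraticForm F2 V} (hP : P ∈ companions Q) (x : V) :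
      P ((g⁻¹).1 x) = P ((h⁻¹).1 x) := by
    rw [← coe_smul_companions_apply g ⟨P, hP⟩, ← coe_smul_companions_apply h ⟨P, hP⟩]
    exact congrArg (fun P : companions Q ↦ P.1 x) (Equiv.congr_fun hgh ⟨P, hP⟩)
  refine inv_injective (Subtype.ext (LinearEquiv.ext fun x ↦ sub_eq_zero.1 (horth _ fun a ha ↦ ?_)))
  have hshift := happly (shift_mem_companions ha) x
  rw [shift_apply, shift_apply, happly ⟨rfl, rfl⟩] at hshift
  rw [QuadraticMap.polar_sub_right, add_left_cancel hshift, sub_self]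

variable [Finite V]

lemma coe_zerosEquivCompanions (hB : Q.polarBilin.Nondegenerate)
    (hN : 2 * (zeros Q).ncard ≠ Nat.card V) (a : zeros Q) :
    (zerosEquivCompanions hB hN a).1 = shift Q a := rfl

lemma symplecticTransvection_smul_of_add_eq (hB : Q.polarBilin.Nondegenerate)
    (hN : 2 * (zeros Q).ncard ≠ Nat.card V) {v : V} {c d : zeros Q} (hcd : c + v = d) :
    symplecticTransvection (isAlt_polarBilin Q) v • zerosEquivCompanions hB hN d =
      zerosEquivCompanions hB hN c := by
  have hzero : shift Q c v = 0 := by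
    rw [shift_apply_eq_add, add_comm v, hcd, c.2, d.2, add_zero]
  rw [smul_companions_eq_iff, coe_zerosEquivCompanions, coe_zerosEquivCompanions,
    comp_symplecticTransvection_of_eq_zero _ (polarBilin_shift Q _) hzero, shift_shift, hcd]

lemma symplecticTransvection_smul_of_add_notMem (hB : Q.polarBilin.Nondegenerate)
    (hN : 2 * (zeros Q).ncard ≠ Nat.card V) {v : V} {c : zeros Q} (hcv : v + c ∉ zeros Q) :
    symplecticTransvection (isAlt_polarBilin Q) v • zerosEquivCompanions hB hN c =
      zerosEquivCompanions hB hN c := by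
  have hne : shift Q c v ≠ 0 := by
    rwa [shift_apply_eq_add, c.2, add_zero]
  rw [smul_companions_eq_iff, coe_zerosEquivCompanions,
    comp_symplecticTransvection_of_ne_zero _ (polarBilin_shift Q _) hne]

lemma toPermHom_symplecticTransvection [DecidableEq (companions Q)]
    (hB : Q.polarBilin.Nondegenerate) (hN : 2 * (zeros Q).ncard ≠ Nat.card V)
    (hS : IsSidon (zeros Q)) {a b : zeros Q} (hab : a ≠ b) :
    MulAction.toPermHom (isometryGroup Q.polarBilin) (companions Q)
        (symplecticTransvection (isAlt_polarBilin Q) (a + b)) =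
      Equiv.swap (zerosEquivCompanions hB hN a) (zerosEquivCompanions hB hN b) := by
  classical
  ext1 P
  obtain ⟨c, rfl⟩ := (zerosEquivCompanions hB hN).surjective P
  rw [MulAction.toPermHom_apply, MulAction.toPerm_apply]
  rcases eq_or_ne c a with rfl | hca
  · rw [Equiv.swap_apply_left]
    refine symplecticTransvection_smul_of_add_eq hB hN ?_
    rw [add_comm (c : V), ← add_assoc, ZModModule.add_self, zero_add]
  rcases eq_or_ne c b with rfl | hcb
  · rw [Equiv.swap_apply_right]
    refine symplecticTransvection_smul_of_add_eq hB hN ?_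
    rw [← add_assoc, ZModModule.add_self, zero_add]
  · rw [Equiv.swap_apply_of_ne_of_ne (by simpa using hca) (by simpa using hcb)]
    exact symplecticTransvection_smul_of_add_notMem hB hN <| hS a a.2 b b.2 c c.2
      (Subtype.coe_ne_coe.2 hab) (Subtype.coe_ne_coe.2 hcb.symm) (Subtype.coe_ne_coe.2 hca.symm)

lemma toPermHom_companions_surjective (hB : Q.polarBilin.Nondegenerate)
    (hN : 2 * (zeros Q).ncard ≠ Nat.card V) (hS : IsSidon (zeros Q)) :
    Function.Surjective
      (MulAction.toPermHom (isometryGroup Q.polarBilin) (companions Q)) := by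
  classical
  have := Finite.of_equiv _ (zerosEquivCompanions hB hN)
  rw [← MonoidHom.range_eq_top, eq_top_iff, ← Equiv.Perm.closure_isSwap, Subgroup.closure_le]
  rintro _ ⟨P, P', hne, rfl⟩
  obtain ⟨a, rfl⟩ := (zerosEquivCompanions hB hN).surjective P
  obtain ⟨b, rfl⟩ := (zerosEquivCompanions hB hN).surjective P'
  exact ⟨_, toPermHom_symplecticTransvection hB hN hS fun h ↦ hne (congrArg _ h)⟩

/-- The isometries of the polar form of `Q` act on the zeros of `Q` by all permutations, through the
identification of the zeros with the companions. -/
def isometryGroupEquivPermZeros (hN : 2 * (zeros Q).ncard ≠ Nat.card V)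
    (hS : IsSidon (zeros Q)) (horth : ∀ x, (∀ a ∈ zeros Q, polar Q a x = 0) → x = 0) :
    isometryGroup Q.polarBilin ≃* Equiv.Perm (zeros Q) :=
  have hB := nondegenerate_polarBilin_of_orthogonal_zeros horth
  (MulEquiv.ofBijective (MulAction.toPermHom _ (companions Q))
    ⟨toPermHom_companions_injective horth, toPermHom_companions_surjective hB hN hS⟩).trans
    (zerosEquivCompanions hB hN).symm.permCongrHom

end QuadraticForm

section Elliptic

open QuadraticMap (polar)

/-- The elliptic quadratic form `x² + xt + t² + yz` on `𝔽₂⁴`. -/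
def ellipticForm : QuadraticForm F2 (Fin 4 → F2) :=
  .proj 0 0 + .proj 0 3 + .proj 3 3 + .proj 1 2

lemma mem_zeros_ellipticForm (x : Fin 4 → F2) :
    x ∈ zeros ellipticForm ↔ x 0 * x 0 + x 0 * x 3 + x 3 * x 3 + x 1 * x 2 = 0 := Iff.rfl

lemma polar_ellipticForm (x y : Fin 4 → F2) :
    polar ellipticForm x y = x 0 * y 3 + x 1 * y 2 + x 2 * y 1 + x 3 * y 0 := by
  simp only [polar, ellipticForm, add_apply, QuadraticMap.proj_apply, Pi.add_apply]
  linear_combination (x 0 * y 0 + x 3 * y 3) * CharTwo.two_eq_zero (R := F2)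

lemma ncard_zeros_ellipticForm : (zeros ellipticForm).ncard = 6 := by
  have hzeros : zeros ellipticForm =
      ({x | x 0 * x 0 + x 0 * x 3 + x 3 * x 3 + x 1 * x 2 = 0} : Finset (Fin 4 → F2)) := by
    ext x
    rw [mem_zeros_ellipticForm, Finset.mem_coe, Finset.mem_filter_univ]
  rw [hzeros, Set.ncard_coe_finset]
  decide +kernel

lemma eq_zero_of_forall_polar_ellipticForm_eq_zero :
    ∀ x, (∀ a ∈ zeros ellipticForm, polar ellipticForm a x = 0) → x = 0 := by
  simp only [mem_zeros_ellipticForm, polar_ellipticForm]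
  decide +kernel

lemma isSidon_zeros_ellipticForm : IsSidon (zeros ellipticForm) := by
  simp only [IsSidon, mem_zeros_ellipticForm]
  decide +kernel

end Elliptic

section Stabilizer

open Matrix

/-- The antidiagonal permutation matrix, the Gram matrix of the symplectic form
`x₀y₃ + x₁y₂ + x₂y₁ + x₃y₀`. -/
def symplecticGram : Matrix (Fin 4) (Fin 4) F2 :=
  !![0, 0, 0, 1; 0, 0, 1, 0; 0, 1, 0, 0; 1, 0, 0, 0]

lemma c0_eq_frobeniusForm : c0 = frobeniusForm 2 symplecticGram := by
  simp only [c0, frobeniusForm, dotProduct, mulVec, symplecticGram, map_apply, of_apply, cons_val',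
    cons_val_fin_one, Fin.sum_univ_four, cons_val_zero, cons_val_one, cons_val, C_0, C_1]
  ring

lemma toBilin'_symplecticGram : symplecticGram.toBilin' = ellipticForm.polarBilin := by
  refine LinearMap.ext₂ fun x y ↦ ?_
  rw [QuadraticMap.polarBilin_apply_apply, polar_ellipticForm, toBilin'_apply]
  simp [symplecticGram, Fin.sum_univ_four]

lemma mem_stab_frobeniusForm {A : Matrix (Fin 4) (Fin 4) F2} {g : GL (Fin 4) F2} :
    g ∈ stab (frobeniusForm 2 A) ↔ g.1ᵀ * A * g.1 = A := by
  change aeval _ _ = _ ↔ _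
  rw [aeval_frobeniusForm, (frobeniusForm_injective le_rfl).eq_iff, ZMod.frobenius_zmod,
    RingHom.coe_id, map_id]

/-- `GL₄(𝔽₂)` as the group of linear automorphisms of `𝔽₂⁴`. -/
def glEquivLinearEquiv : GL (Fin 4) F2 ≃* ((Fin 4 → F2) ≃ₗ[F2] (Fin 4 → F2)) :=
  GeneralLinearGroup.toLin.trans (LinearMap.GeneralLinearGroup.generalLinearEquiv F2 _)

lemma stab_frobeniusForm (A : Matrix (Fin 4) (Fin 4) F2) :
    stab (frobeniusForm 2 A) = (isometryGroup A.toBilin').comap glEquivLinearEquiv := by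
  ext g
  rw [mem_stab_frobeniusForm, ← toBilin'.injective.eq_iff, ← toBilin'_comp]
  exact LinearMap.ext_iff₂

/-- A substitution fixes the Frobenius form of `A` if and only if it is an isometry of the bilinear
form with Gram matrix `A`, because over `𝔽₂` Frobenius acts trivially on its entries. -/
def stabFrobeniusFormEquiv (A : Matrix (Fin 4) (Fin 4) F2) :
    stab (frobeniusForm 2 A) ≃* isometryGroup A.toBilin' :=
  (glEquivLinearEquiv.subgroupMap _).trans <| MulEquiv.subgroupCongr <| by
    rw [stab_frobeniusForm, Subgroup.map_comap_eq_self_of_surjective glEquivLinearEquiv.surjective]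

end Stabilizer

/-- the stabilizer of `c₀ = x²t + y²z + yz² + xt²` in `GL₄(𝔽₂)` is isomorphic
to the symmetric group `S₆`; in particular it has order `720`. -/
theorem stab_c0_iso_S6 :
    Nonempty (stab c0 ≃* Equiv.Perm (Fin 6)) ∧ Nat.card (stab c0) = 720 := by
  have hN : 2 * (zeros ellipticForm).ncard ≠ Nat.card (Fin 4 → F2) := by
    simp [ncard_zeros_ellipticForm]
  have e₁ : stab c0 ≃* isometryGroup ellipticForm.polarBilin := by
    rw [c0_eq_frobeniusForm, ← toBilin'_symplecticGram]
    exact stabFrobeniusFormEquiv _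
  have e₂ : isometryGroup ellipticForm.polarBilin ≃* Equiv.Perm (zeros ellipticForm) :=
    isometryGroupEquivPermZeros hN isSidon_zeros_ellipticForm
      eq_zero_of_forall_polar_ellipticForm_eq_zero
  have e₃ : zeros ellipticForm ≃ Fin 6 := Finite.equivFinOfCardEq ncard_zeros_ellipticForm
  have e : stab c0 ≃* Equiv.Perm (Fin 6) := (e₁.trans e₂).trans e₃.permCongrHom
  exact ⟨⟨e⟩, by rw [Nat.card_congr e.toEquiv, Nat.card_perm, Nat.card_fin]; rfl⟩
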